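/- arXiv:2111.11246 — 4 statements merged into one kernel-verified Lean document; each statement's English description precedes it below -/
import Mathlib

section
/- Let a,b,c,d ∈ ℂ with ad−bc ≠ 0, let β(z) = (az+b)/(cz+d), and let β̄(z) = (conj(a)·z+conj(b))/(conj(c)·z+conj(d)) be the FLT with complex-conjugated coefficients. Suppose β∘β̄ is the identity, i.e. for every z ∈ ℂ for which conj(c)·z+conj(d) ≠ 0 and c·β̄(z)+d ≠ 0 one has β(β̄(z)) = z. Then there exist a′,b′,c′ ∈ ℂ with conj(b′) = −b′ and conj(c′) = −c′ such that a′·conj(a′) − b′c′ ≠ 0 and β(z) = (a′z+b′)/(c′z+conj(a′)) for every z where both sides are defined. Moreover this representation is unique up to a common nonzero real factor: if (a₁,b₁,c₁) and (a₂,b₂,c₂) are two such triples (with b₁,b₂,c₁,c₂ purely imaginary) representing the same transformation β, then there is a nonzero real number η with (a₂,b₂,c₂) = (ηa₁, ηb₁, ηc₁). -/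
open ComplexConjugate

/-!
Write `M = !![a, b; c, d]` and `D = det M`. Two rational functions that agree off the zeros of
their denominators satisfy a polynomial identity (`quadratic_eq_zero`). Applied to
`β ∘ β̄ = id`, this gives `M * M̄ = l • 1` for a scalar `l`, hence `M̄ = (l / D) • adj M`, that is,
`conj a = m * d`, `conj b = -m * b`, `conj c = -m * c`, `conj d = m * a` with `m = l / D`.
Conjugating twice shows `m * conj m = 1`, so by Hilbert 90 for `ℂ / ℝ` there is `ν ≠ 0` with
`conj ν * m = ν`; the matrix `ν • M` then has the required shape.

For uniqueness, matrices representing the same transformation are proportional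
(`proportional_of_eq`), and a scalar `k` relating two triples in normal form satisfies
`conj k = k`, because conjugation acts on both triples by the same rule and they are nonzero.
-/

/-- A quadratic polynomial vanishing off the zeros of two nonzero affine functions is zero. -/
lemma quadratic_eq_zero {p q r l₁ m₁ l₂ m₂ : ℂ}
    (h₁ : l₁ ≠ 0 ∨ m₁ ≠ 0) (h₂ : l₂ ≠ 0 ∨ m₂ ≠ 0)
    (h : ∀ z : ℂ, l₁ * z + m₁ ≠ 0 → l₂ * z + m₂ ≠ 0 → p * z ^ 2 + q * z + r = 0) :
    p = 0 ∧ q = 0 ∧ r = 0 := by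
  have affine_ne : ∀ l m : ℂ, (l ≠ 0 ∨ m ≠ 0) →
      (Polynomial.C l * Polynomial.X + Polynomial.C m : Polynomial ℂ) ≠ 0 := by
    intro l m hlm h0
    have e0 := congrArg (Polynomial.coeff · 0) h0
    have e1 := congrArg (Polynomial.coeff · 1) h0
    simp [Polynomial.coeff_C] at e0 e1
    tauto
  have hprod : (Polynomial.C p * Polynomial.X ^ 2 + Polynomial.C q * Polynomial.X +
      Polynomial.C r : Polynomial ℂ) * ((Polynomial.C l₁ * Polynomial.X + Polynomial.C m₁) *
      (Polynomial.C l₂ * Polynomial.X + Polynomial.C m₂)) = 0 := by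
    apply Polynomial.funext
    intro z
    by_cases hz₁ : l₁ * z + m₁ = 0
    · simp [hz₁]
    by_cases hz₂ : l₂ * z + m₂ = 0
    · simp [hz₂]
    simp [h z hz₁ hz₂]
  have hq := (mul_eq_zero.mp hprod).resolve_right
    (mul_ne_zero (affine_ne _ _ h₁) (affine_ne _ _ h₂))
  have e0 := congrArg (Polynomial.coeff · 0) hq
  have e1 := congrArg (Polynomial.coeff · 1) hq
  have e2 := congrArg (Polynomial.coeff · 2) hq
  simp [Polynomial.coeff_C, Polynomial.coeff_X, Polynomial.coeff_X_pow] at e0 e1 e2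
  exact ⟨e2, e1, e0⟩

/-- Invertible matrices representing the same fractional linear transformation are
proportional. -/
lemma proportional_of_eq {a b c d a₁ b₁ c₁ d₁ : ℂ}
    (hD : a * d - b * c ≠ 0) (hD₁ : a₁ * d₁ - b₁ * c₁ ≠ 0)
    (h : ∀ z : ℂ, c * z + d ≠ 0 → c₁ * z + d₁ ≠ 0 →
      (a * z + b) / (c * z + d) = (a₁ * z + b₁) / (c₁ * z + d₁)) :
    ∃ k : ℂ, k ≠ 0 ∧ a₁ = k * a ∧ b₁ = k * b ∧ c₁ = k * c ∧ d₁ = k * d := by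
  have hcd : c ≠ 0 ∨ d ≠ 0 := by
    by_contra! hn
    simp [hn.1, hn.2] at hD
  have hcd₁ : c₁ ≠ 0 ∨ d₁ ≠ 0 := by
    by_contra! hn
    simp [hn.1, hn.2] at hD₁
  obtain ⟨E₁, E₂, E₃⟩ := quadratic_eq_zero (p := a * c₁ - a₁ * c)
    (q := a * d₁ + b * c₁ - a₁ * d - b₁ * c) (r := b * d₁ - b₁ * d) hcd hcd₁ (by
      intro z hz hz₁
      have := (div_eq_div_iff hz hz₁).mp (h z hz hz₁)
      linear_combination this)
  -- The entries of `N = M₁ * adj M`: the relations `E₁, E₂, E₃` say that every vector is an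
  -- eigenvector of `N`, so `N` is scalar.
  have N₁₂ : a * b₁ - b * a₁ = 0 := by
    apply (mul_eq_zero.mp _).resolve_left hD
    linear_combination -(b ^ 2 * E₁ - a * b * E₂ + a ^ 2 * E₃)
  have N₂₁ : c₁ * d - d₁ * c = 0 := by
    apply (mul_eq_zero.mp _).resolve_left hD
    linear_combination d ^ 2 * E₁ - c * d * E₂ + c ^ 2 * E₃
  have N₁₁ : a₁ * d - b₁ * c = a * d₁ - b * c₁ := by
    apply mul_left_cancel₀ hD
    linear_combination 2 * b * d * E₁ - (a * d + b * c) * E₂ + 2 * a * c * E₃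
  refine ⟨(a₁ * d - b₁ * c) / (a * d - b * c), ?_, ?_, ?_, ?_, ?_⟩
  · refine div_ne_zero (fun h0 => hD₁ ?_) hD
    -- `det N = D * det M₁`
    apply (mul_eq_zero.mp _).resolve_left hD
    linear_combination (a * d₁ - b * c₁) * h0 - (c₁ * d - d₁ * c) * N₁₂
  · rw [div_mul_eq_mul_div, eq_div_iff hD]
    linear_combination c * N₁₂
  · rw [div_mul_eq_mul_div, eq_div_iff hD]
    linear_combination d * N₁₂
  · rw [div_mul_eq_mul_div, eq_div_iff hD]
    linear_combination a * N₂₁ - c * N₁₁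
  · rw [div_mul_eq_mul_div, eq_div_iff hD]
    linear_combination b * N₂₁ - d * N₁₁

/-- Hilbert 90 for `ℂ / ℝ`. -/
lemma exists_conj_mul_eq {m : ℂ} (hm : m * conj m = 1) :
    ∃ ν : ℂ, ν ≠ 0 ∧ conj ν * m = ν := by
  by_cases h : 1 + m = 0
  · refine ⟨Complex.I, Complex.I_ne_zero, ?_⟩
    rw [Complex.conj_I]
    linear_combination -Complex.I * h
  · refine ⟨1 + m, h, ?_⟩
    rw [map_add, map_one]
    linear_combination hm

/-- If `M * M̄` induces the identity, then `M̄ = m • adj M` for some `m` of modulus `1`. -/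
lemma conj_eq_smul_adjugate {a b c d : ℂ} (hdet : a * d - b * c ≠ 0)
    (hinv : ∀ z : ℂ, conj c * z + conj d ≠ 0 →
      c * ((conj a * z + conj b) / (conj c * z + conj d)) + d ≠ 0 →
      (a * ((conj a * z + conj b) / (conj c * z + conj d)) + b) /
        (c * ((conj a * z + conj b) / (conj c * z + conj d)) + d) = z) :
    ∃ m : ℂ, m * conj m = 1 ∧ conj a = m * d ∧ conj b = -m * b ∧ conj c = -m * c ∧
      conj d = m * a := by
  have hcdet : conj a * conj d - conj b * conj c ≠ 0 := by
    simpa using (map_ne_zero (starRingEnd ℂ)).mpr hdet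
  have hcd : c ≠ 0 ∨ d ≠ 0 := by
    by_contra! hn
    simp [hn.1, hn.2] at hdet
  have hcd' : conj c ≠ 0 ∨ conj d ≠ 0 := by simpa using hcd
  -- The bottom row of `M * M̄` is nonzero since `M̄` is invertible.
  have hRS : c * conj a + d * conj c ≠ 0 ∨ c * conj b + d * conj d ≠ 0 := by
    by_contra! hn
    obtain ⟨h1, h2⟩ := hn
    have hc : c = 0 := by
      apply (mul_eq_zero.mp _).resolve_left hcdet
      linear_combination conj d * h1 - conj c * h2
    have hd : d = 0 := by
      apply (mul_eq_zero.mp _).resolve_left hcdet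
      linear_combination conj a * h2 - conj b * h1
    tauto
  obtain ⟨R, PS, Q⟩ := quadratic_eq_zero (p := c * conj a + d * conj c)
    (q := c * conj b + d * conj d - (a * conj a + b * conj c))
    (r := -(a * conj b + b * conj d)) hcd' hRS (by
      intro z hz hz'
      have e1 : c * ((conj a * z + conj b) / (conj c * z + conj d)) + d =
          ((c * conj a + d * conj c) * z + (c * conj b + d * conj d)) /
            (conj c * z + conj d) := by
        rw [mul_div_assoc', div_add' _ _ _ hz]
        ring
      have e2 : a * ((conj a * z + conj b) / (conj c * z + conj d)) + b =
          ((a * conj a + b * conj c) * z + (a * conj b + b * conj d)) /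
            (conj c * z + conj d) := by
        rw [mul_div_assoc', div_add' _ _ _ hz]
        ring
      have := hinv z hz (by rw [e1]; exact div_ne_zero hz' hz)
      rw [e1, e2, div_div_div_cancel_right₀ hz, div_eq_iff hz'] at this
      linear_combination -this)
  obtain ⟨m, hm⟩ : ∃ m, m * (a * d - b * c) = a * conj a + b * conj c :=
    ⟨_, div_mul_cancel₀ _ hdet⟩
  have ha : conj a = m * d := by
    apply mul_left_cancel₀ hdet
    linear_combination -d * hm - b * R
  have hb : conj b = -m * b := by
    apply mul_left_cancel₀ hdet
    linear_combination b * hm - d * Q - b * PS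
  have hc : conj c = -m * c := by
    apply mul_left_cancel₀ hdet
    linear_combination c * hm + a * R
  have hd : conj d = m * a := by
    apply mul_left_cancel₀ hdet
    linear_combination -a * hm + c * Q + a * PS
  refine ⟨m, ?_, ha, hb, hc, hd⟩
  have hc2 : c = -conj m * conj c := by simpa using congrArg conj hc
  have hd2 : d = conj m * conj a := by simpa using congrArg conj hd
  rcases hcd with h | h
  · apply mul_right_cancel₀ h
    linear_combination -hc2 + conj m * hc
  · apply mul_right_cancel₀ h
    linear_combination -hd2 - conj m * ha

/-- **Normal form of involutive FLTs**: if the map `z ↦ β(conj z)` is an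
involution, i.e. `β ∘ β̄ = id` where `β̄` has complex-conjugated coefficients,
then `β(z) = (a'z+b')/(c'z+conj a')` with `b',c'` purely imaginary, and this
representation is unique up to a nonzero real common factor. -/
theorem flt_involution_normal_form
    (a b c d : ℂ) (hdet : a * d - b * c ≠ 0)
    (hinv : ∀ z : ℂ, conj c * z + conj d ≠ 0 →
      c * ((conj a * z + conj b) / (conj c * z + conj d)) + d ≠ 0 →
      (a * ((conj a * z + conj b) / (conj c * z + conj d)) + b) /
        (c * ((conj a * z + conj b) / (conj c * z + conj d)) + d) = z) :
    (∃ a' b' c' : ℂ, conj b' = -b' ∧ conj c' = -c' ∧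
      a' * conj a' - b' * c' ≠ 0 ∧
      ∀ z : ℂ, c * z + d ≠ 0 → c' * z + conj a' ≠ 0 →
        (a * z + b) / (c * z + d) = (a' * z + b') / (c' * z + conj a')) ∧
    (∀ a₁ b₁ c₁ a₂ b₂ c₂ : ℂ,
      conj b₁ = -b₁ → conj c₁ = -c₁ → conj b₂ = -b₂ → conj c₂ = -c₂ →
      a₁ * conj a₁ - b₁ * c₁ ≠ 0 → a₂ * conj a₂ - b₂ * c₂ ≠ 0 →
      (∀ z : ℂ, c * z + d ≠ 0 → c₁ * z + conj a₁ ≠ 0 →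
        (a * z + b) / (c * z + d) = (a₁ * z + b₁) / (c₁ * z + conj a₁)) →
      (∀ z : ℂ, c * z + d ≠ 0 → c₂ * z + conj a₂ ≠ 0 →
        (a * z + b) / (c * z + d) = (a₂ * z + b₂) / (c₂ * z + conj a₂)) →
      ∃ η : ℝ, η ≠ 0 ∧ a₂ = (η : ℂ) * a₁ ∧ b₂ = (η : ℂ) * b₁ ∧
        c₂ = (η : ℂ) * c₁) := by
  refine ⟨?_, ?_⟩
  · obtain ⟨m, hm, ha, hb, hc, -⟩ := conj_eq_smul_adjugate hdet hinv
    obtain ⟨ν, hν, hνm⟩ := exists_conj_mul_eq hm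
    have ha' : conj (ν * a) = ν * d := by
      rw [map_mul, ha]
      linear_combination d * hνm
    refine ⟨ν * a, ν * b, ν * c, ?_, ?_, ?_, ?_⟩
    · rw [map_mul, hb]
      linear_combination -b * hνm
    · rw [map_mul, hc]
      linear_combination -c * hνm
    · rw [ha']
      have : ν * a * (ν * d) - ν * b * (ν * c) = ν ^ 2 * (a * d - b * c) := by ring
      rw [this]
      exact mul_ne_zero (pow_ne_zero 2 hν) hdet
    · intro z _ _
      rw [ha', mul_assoc, mul_assoc, ← mul_add, ← mul_add, mul_div_mul_left _ _ hν]
  · intro a₁ b₁ c₁ a₂ b₂ c₂ hb₁ hc₁ hb₂ hc₂ hD₁ hD₂ h₁ h₂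
    obtain ⟨k₁, hk₁, ea₁, eb₁, ec₁, ed₁⟩ := proportional_of_eq hdet hD₁ h₁
    obtain ⟨k₂, hk₂, ea₂, eb₂, ec₂, ed₂⟩ := proportional_of_eq hdet hD₂ h₂
    obtain ⟨k, hk⟩ : ∃ k, k * k₁ = k₂ := ⟨_, div_mul_cancel₀ _ hk₁⟩
    have ka : a₂ = k * a₁ := by rw [ea₁, ea₂, ← hk, mul_assoc]
    have kb : b₂ = k * b₁ := by rw [eb₁, eb₂, ← hk, mul_assoc]
    have kc : c₂ = k * c₁ := by rw [ec₁, ec₂, ← hk, mul_assoc]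
    have kd : conj a₂ = k * conj a₁ := by rw [ed₁, ed₂, ← hk, mul_assoc]
    have hreal : conj k = k := by
      by_cases h0 : a₁ = 0
      · have hb0 : b₁ ≠ 0 := by
          rintro rfl
          simp [h0] at hD₁
        rw [kb, map_mul, hb₁] at hb₂
        apply mul_right_cancel₀ hb0
        linear_combination -hb₂
      · rw [ka, map_mul] at kd
        exact mul_right_cancel₀ ((map_ne_zero (starRingEnd ℂ)).mpr h0) kd
    obtain ⟨η, rfl⟩ := Complex.conj_eq_iff_real.mp hreal
    refine ⟨η, ?_, ka, kb, kc⟩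
    rintro rfl
    exact hk₂ (by simpa using hk.symm)
end

section
/- Let Σ ⊂ ℂ be a finite set, let O_Σ = ℂ[z, (z−a)⁻¹ : a ∈ Σ] be the ring of rational functions with poles contained in Σ, let M be the free O_Σ-module on the set Σ* of words over Σ, and let ∂_z : M → M be the ℂ-linear map with ∂_z(e⊗φ) = e⊗φ′ and ∂_z(wa⊗φ) = wa⊗φ′ + w⊗(φ/(z−a)) for w ∈ Σ*, a ∈ Σ, φ ∈ O_Σ. Then the kernel of ∂_z is exactly {e⊗c : c ∈ ℂ}, i.e. an element x ∈ M satisfies ∂_z x = 0 if and only if x = e⊗c for some constant c ∈ ℂ. -/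
/-!
Comparing coefficients at a word `w`, the equation `D x = 0` says
`(x w)' + ∑ A, x (w ++ [A]) / (z - A) = 0` (`D_apply`). If all words in the support of `x` have
length at most `n + 1`, then the coefficients at words of length `n + 1` have zero derivative,
hence are constants (`eq_C_of_rderiv_eq_zero`). The equation at a word `u` of length `n` then
reads `(x u)' = -∑ A, c_A / (z - A)` with constants `c_A`; the derivative of a rational function
has no residues, so every `c_A` vanishes (`eq_zero_of_rderiv_eq`). Descending on `n`, the support
of `x` is contained in `{e}`, and the coefficient at `e` has zero derivative, so it is a constant.
-/

/-- The derivative of a rational function `φ = num/denom`, namely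
`φ' = (num'·denom − num·denom')/denom²`. -/
noncomputable def rderiv (f : RatFunc ℂ) : RatFunc ℂ :=
  algebraMap (Polynomial ℂ) (RatFunc ℂ)
      (Polynomial.derivative f.num * f.denom - f.num * Polynomial.derivative f.denom)
    / algebraMap (Polynomial ℂ) (RatFunc ℂ) (f.denom ^ 2)

/-- `O_Σ = ℂ[z, (z−a)⁻¹ : a ∈ Σ]`, the subalgebra of the field of rational
functions generated by `z` and `(z−a)⁻¹` for `a ∈ Σ`. -/
noncomputable def ratO (S : Finset ℂ) : Subalgebra ℂ (RatFunc ℂ) :=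
  Algebra.adjoin ℂ
    (insert RatFunc.X ((fun a : ℂ => (RatFunc.X - RatFunc.C a)⁻¹) '' (S : Set ℂ)))

/-- Words over the alphabet `Σ`. -/
abbrev Word (S : Finset ℂ) := List {a : ℂ // a ∈ S}

/-- The free module on the set of words over `Σ` with rational-function
coefficients; its elements with all coefficients in `O_Σ` form the free
`O_Σ`-module `M` on `Σ*`. -/
abbrev Mdl (S : Finset ℂ) := Word S →₀ RatFunc ℂ

open Polynomial in
theorem eq_C_of_rderiv_eq_zero (f : RatFunc ℂ) (h : rderiv f = 0) : ∃ c : ℂ, f = RatFunc.C c := by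
  have hq := f.denom_ne_zero
  have hcop := f.isCoprime_num_denom
  have hf := f.num_div_denom
  have hm := f.monic_denom
  unfold rderiv at h
  rw [div_eq_zero_iff] at h
  have h1 : derivative f.num * f.denom - f.num * derivative f.denom = 0 := by
    rcases h with h | h
    · exact (map_eq_zero_iff _ (RatFunc.algebraMap_injective ℂ)).1 h
    · exact absurd ((map_eq_zero_iff _ (RatFunc.algebraMap_injective ℂ)).1 h) (pow_ne_zero 2 hq)
  have hdvd : f.denom ∣ derivative f.denom := by
    apply hcop.symm.dvd_of_dvd_mul_left
    exact ⟨derivative f.num, by linear_combination -h1⟩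
  -- the denominator divides its own derivative, which has smaller degree
  have hd0 : derivative f.denom = 0 :=
    Polynomial.eq_zero_of_dvd_of_degree_lt hdvd (degree_derivative_lt hq)
  have hd1 : f.denom = 1 := by
    exact hm.natDegree_eq_zero.1 (derivative_eq_zero.1 hd0)
  have hn0 : derivative f.num = 0 := by
    rw [hd1] at h1
    simpa using h1
  have hn := eq_C_of_natDegree_eq_zero (derivative_eq_zero.1 hn0)
  refine ⟨f.num.coeff 0, ?_⟩
  rw [← hf, hd1, hn]
  simp

open Polynomial in
/-- The derivative of a rational function has zero residue at `a`: here `u / v` is regular at `a`,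
so `c` is the residue of `c / (z - a) + u / v`. If `a` is a zero of the denominator of `f` of order
`m`, the left-hand side has a pole of order `m + 1 ≠ 1`; otherwise it is regular at `a`. -/
theorem eq_zero_of_rderiv_eq (f : RatFunc ℂ) (a c : ℂ) (u v : ℂ[X]) (hv : v.eval a ≠ 0)
    (h : rderiv f = RatFunc.C c / (RatFunc.X - RatFunc.C a)
      + algebraMap ℂ[X] (RatFunc ℂ) u / algebraMap ℂ[X] (RatFunc ℂ) v) : c = 0 := by
  have hq := f.denom_ne_zero
  have hcop := f.isCoprime_num_denom
  unfold rderiv at h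
  generalize f.num = p at *
  generalize f.denom = q at *
  have hv0 : v ≠ 0 := by rintro rfl; simp at hv
  have hXa : (X - C a : ℂ[X]) ≠ 0 := X_sub_C_ne_zero a
  have key : (derivative p * q - p * derivative q) * ((X - C a) * v)
      = q ^ 2 * (C c * v + (X - C a) * u) := by
    apply RatFunc.algebraMap_injective ℂ
    have e1 : algebraMap ℂ[X] (RatFunc ℂ) q ≠ 0 := RatFunc.algebraMap_ne_zero hq
    have e2 : algebraMap ℂ[X] (RatFunc ℂ) v ≠ 0 := RatFunc.algebraMap_ne_zero hv0
    have e3 := RatFunc.algebraMap_ne_zero hXa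
    rw [← RatFunc.algebraMap_X, ← RatFunc.algebraMap_C, ← RatFunc.algebraMap_C, ← map_sub, map_pow,
      div_add_div _ _ e3 e2, div_eq_div_iff (pow_ne_zero 2 e1) (mul_ne_zero e3 e2)] at h
    rw [map_mul, map_mul (algebraMap ℂ[X] (RatFunc ℂ)) (X - C a) v, h]
    simp only [map_mul, map_add, map_pow]
    ring
  obtain ⟨s, hqs, hs⟩ := Polynomial.exists_eq_pow_rootMultiplicity_mul_and_not_dvd q hq a
  rw [dvd_iff_isRoot, IsRoot.def] at hs
  generalize q.rootMultiplicity a = m at hqs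
  rcases m with _ | k
  · rw [pow_zero, one_mul] at hqs
    subst hqs
    have := congrArg (eval a) key
    simpa [hs, hv] using this
  · exfalso
    have hp : p.eval a ≠ 0 := by
      intro hp
      obtain ⟨α, β, hab⟩ := hcop
      have := congrArg (eval a) hab
      simp [hqs, hp] at this
    subst hqs
    -- cancelling `(X - a) ^ (k + 1)` leaves an identity whose sides differ at `a`
    have key2 : (X - C a) ^ (k + 1) * (((X - C a) * (derivative p * s - p * derivative s)
        - C ((k : ℂ) + 1) * p * s) * v)
        = (X - C a) ^ (k + 1) * ((X - C a) ^ (k + 1) * s ^ 2 * (C c * v + (X - C a) * u)) := by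
      simp only [derivative_mul, derivative_X_sub_C_pow, Nat.add_sub_cancel, Nat.cast_add,
        Nat.cast_one] at key
      simp only [map_add, map_one, map_natCast] at key ⊢
      linear_combination key
    have := congrArg (eval a) (mul_left_cancel₀ (pow_ne_zero _ hXa) key2)
    have hk : (k : ℂ) + 1 ≠ 0 := by exact_mod_cast Nat.succ_ne_zero k
    simp [hs, hv, hp, hk] at this

open Polynomial in
/-- A sum of simple fractions with poles away from `a` is a quotient of polynomials whose
denominator does not vanish at `a`. -/
theorem exists_sum_eq_div {ι : Type*} (t : Finset ι) (b : ι → ℂ) (d : ι → ℂ) (a : ℂ)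
    (hb : ∀ i ∈ t, b i ≠ a) :
    ∃ u v : ℂ[X], v.eval a ≠ 0 ∧ ∑ i ∈ t, RatFunc.C (d i) / (RatFunc.X - RatFunc.C (b i))
      = algebraMap ℂ[X] (RatFunc ℂ) u / algebraMap ℂ[X] (RatFunc ℂ) v := by
  refine Finset.sum_induction _ (fun g => ∃ u v : ℂ[X], v.eval a ≠ 0 ∧
    g = algebraMap ℂ[X] (RatFunc ℂ) u / algebraMap ℂ[X] (RatFunc ℂ) v) ?_ ?_ ?_
  · rintro _ _ ⟨u, v, hv, rfl⟩ ⟨u', v', hv', rfl⟩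
    have e : ∀ v : ℂ[X], v.eval a ≠ 0 → algebraMap ℂ[X] (RatFunc ℂ) v ≠ 0 := fun v hv =>
      RatFunc.algebraMap_ne_zero (by rintro rfl; simp at hv)
    refine ⟨u * v' + v * u', v * v', by simp [hv, hv'], ?_⟩
    rw [div_add_div _ _ (e v hv) (e v' hv')]
    simp
  · exact ⟨0, 1, by simp, by simp⟩
  · intro i hi
    exact ⟨C (d i), X - C (b i), by simpa [sub_eq_zero] using (hb i hi).symm, by simp⟩

/-- The coefficient of `D x` at a word `w`. -/
theorem D_apply (S : Finset ℂ) (D : Mdl S →ₗ[ℂ] Mdl S)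
    (hD0 : ∀ φ : RatFunc ℂ,
      D (Finsupp.single ([] : Word S) φ) = Finsupp.single ([] : Word S) (rderiv φ))
    (hD1 : ∀ (w : Word S) (A : {a : ℂ // a ∈ S}) (φ : RatFunc ℂ),
      D (Finsupp.single (w ++ [A]) φ)
        = Finsupp.single (w ++ [A]) (rderiv φ)
          + Finsupp.single w (φ / (RatFunc.X - RatFunc.C (A : ℂ)))) (x : Mdl S) (w : Word S) :
    D x w = rderiv (x w) + ∑ A : {a : ℂ // a ∈ S},
      x (w ++ [A]) / (RatFunc.X - RatFunc.C (A : ℂ)) := by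
  classical
  -- additivity of `rderiv` is inherited from that of `D` on multiples of the empty word
  have r0 : rderiv 0 = 0 := by
    have := hD0 0
    rw [Finsupp.single_zero, map_zero] at this
    simpa using this.symm
  have radd : ∀ f g, rderiv (f + g) = rderiv f + rderiv g := by
    intro f g
    have := hD0 (f + g)
    rw [Finsupp.single_add, map_add, hD0, hD0, ← Finsupp.single_add] at this
    exact (Finsupp.single_injective _ this).symm
  induction x using Finsupp.induction_linear with
  | zero => simp [r0]
  | add f g hf hg =>
    simp only [map_add, Finsupp.add_apply, hf, hg, radd, add_div, Finset.sum_add_distrib]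
    ring
  | single v φ =>
    have hr : ∀ v : Word S, rderiv (Finsupp.single v φ w) = Finsupp.single v (rderiv φ) w := by
      intro v
      simp only [Finsupp.single_apply]
      split_ifs <;> simp [r0]
    rw [hr]
    rcases List.eq_nil_or_concat v with rfl | ⟨u, A, rfl⟩
    · rw [hD0]
      simp [Finsupp.single_apply]
    · simp only [List.concat_eq_append]
      rw [hD1, Finsupp.add_apply]
      congr 1
      rw [Finset.sum_eq_single A]
      · by_cases h : u = w <;> simp [h]
      · intro B _ hB
        rw [Finsupp.single_eq_of_ne, zero_div]
        intro h
        have := List.append_inj' h rfl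
        simp_all
      · simp

/-- **The kernel of `∂_z` on the free `O_Σ`-module on words is `e⊗ℂ`**:
if `∂_z` is the ℂ-linear map with `∂_z(e⊗φ) = e⊗φ'` and
`∂_z(wa⊗φ) = wa⊗φ' + w⊗(φ/(z−a))`, then an element `x` with coefficients in
`O_Σ` satisfies `∂_z x = 0` iff `x = e⊗c` for some constant `c ∈ ℂ`. -/
theorem ker_partial_eq_constants
    (S : Finset ℂ) (D : Mdl S →ₗ[ℂ] Mdl S)
    (hD0 : ∀ φ : RatFunc ℂ,
      D (Finsupp.single ([] : Word S) φ) = Finsupp.single ([] : Word S) (rderiv φ))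
    (hD1 : ∀ (w : Word S) (A : {a : ℂ // a ∈ S}) (φ : RatFunc ℂ),
      D (Finsupp.single (w ++ [A]) φ)
        = Finsupp.single (w ++ [A]) (rderiv φ)
          + Finsupp.single w (φ / (RatFunc.X - RatFunc.C (A : ℂ)))) :
    ∀ x : Mdl S, (∀ w : Word S, x w ∈ ratO S) →
      (D x = 0 ↔ ∃ c : ℂ, x = Finsupp.single ([] : Word S) (RatFunc.C c)) := by
  have hD := D_apply S D hD0 hD1
  intro x _
  constructor
  · intro hx
    have hE : ∀ w, rderiv (x w) + ∑ A : {a : ℂ // a ∈ S},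
        x (w ++ [A]) / (RatFunc.X - RatFunc.C (A : ℂ)) = 0 := by
      intro w
      rw [← hD, hx, Finsupp.zero_apply]
    -- a word all of whose one-letter extensions have coefficient zero has constant coefficient
    have hconst : ∀ w, (∀ A, x (w ++ [A]) = 0) → ∃ c : ℂ, x w = RatFunc.C c := by
      intro w hw
      apply eq_C_of_rderiv_eq_zero
      simpa [hw] using hE w
    have main : ∀ n : ℕ, (∀ w, n < w.length → x w = 0) → ∀ w, 0 < w.length → x w = 0 := by
      intro n
      induction n with
      | zero => exact id
      | succ n ih =>
        intro hn
        refine ih fun w hw => ?_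
        rcases Nat.lt_or_ge (n + 1) w.length with h | h
        · exact hn w h
        have hlen : w.length = n + 1 := by omega
        rcases List.eq_nil_or_concat w with rfl | ⟨u, A, rfl⟩
        · simp at hlen
        rw [List.concat_eq_append] at hlen ⊢
        have hu : u.length = n := by simpa using hlen
        choose c hc using fun B => hconst (u ++ [B]) fun A => hn _ (by simp [hu])
        obtain ⟨p, q, hq, hpq⟩ := exists_sum_eq_div (Finset.univ.erase A)
          (fun B : {a : ℂ // a ∈ S} => (B : ℂ)) (fun B => - c B) (A : ℂ)
          (fun B hB h => (Finset.mem_erase.1 hB).1 (Subtype.ext h))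
        have hc0 : - c A = 0 := by
          refine eq_zero_of_rderiv_eq (x u) A (- c A) p q hq ?_
          rw [← hpq, Finset.add_sum_erase Finset.univ
            (fun B : {a : ℂ // a ∈ S} => RatFunc.C (- c B) / (RatFunc.X - RatFunc.C (B : ℂ)))
            (Finset.mem_univ A)]
          have := hE u
          simp only [hc] at this
          refine (eq_neg_of_add_eq_zero_left this).trans ?_
          refine (Finset.sum_neg_distrib _).symm.trans (Finset.sum_congr rfl fun B _ => ?_)
          rw [map_neg]
          exact (neg_div _ _).symm
        rw [hc A, neg_eq_zero.1 hc0, map_zero]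
    have hpos := main (x.support.sup List.length) fun w hw => by
      by_contra h
      exact absurd (Finset.le_sup (f := List.length) (Finsupp.mem_support_iff.2 h)) (by omega)
    obtain ⟨c, hc⟩ := hconst [] fun A => hpos _ (by simp)
    refine ⟨c, Finsupp.ext fun w => ?_⟩
    rcases w with _ | ⟨A, w⟩
    · simp [hc]
    · rw [hpos _ (by simp), Finsupp.single_eq_of_ne (by simp)]
  · rintro ⟨c, rfl⟩
    rw [hD0]
    simp [rderiv]
end

section
/- Let Σ ⊂ ℂ be a finite set, let O_Σ = ℂ[z, (z−a)⁻¹ : a ∈ Σ], let M be the free O_Σ-module on the set Σ* of words over Σ, equipped with the commutative product (u⊗φ)·(v⊗ψ) = (u ш v)⊗(φψ) given by the shuffle product ш on words, and let ∂_z : M → M be the ℂ-linear map with ∂_z(e⊗φ) = e⊗φ′ and ∂_z(wa⊗φ) = wa⊗φ′ + w⊗(φ/(z−a)). Then ∂_z is a derivation of this algebra: ∂_z(x·y) = (∂_z x)·y + x·(∂_z y) for all x,y ∈ M. -/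
/-- The list of all shuffles of two words (with multiplicity), so that the
shuffle product of `u` and `v` is the formal sum of the entries of
`shuf u v`. -/
def shuf {α : Type*} : List α → List α → List (List α)
  | [], v => [v]
  | u :: us, [] => [u :: us]
  | a :: u, b :: v =>
      ((shuf u (b :: v)).map (a :: ·)) ++ ((shuf (a :: u) v).map (b :: ·))
termination_by u v => u.length + v.length

/-- The derivative of a rational function may be computed from any presentation as a fraction,
not only the reduced one. -/
theorem rderiv_of_eq_div (f : RatFunc ℂ) (p q : Polynomial ℂ) (hq : q ≠ 0)
    (hf : f = algebraMap (Polynomial ℂ) (RatFunc ℂ) p / algebraMap (Polynomial ℂ) (RatFunc ℂ) q) :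
    rderiv f
      = algebraMap (Polynomial ℂ) (RatFunc ℂ)
          (Polynomial.derivative p * q - p * Polynomial.derivative q)
        / algebraMap (Polynomial ℂ) (RatFunc ℂ) (q ^ 2) := by
  have hE : f.denom ≠ 0 := f.denom_ne_zero
  have h : f.num * q = p * f.denom := by
    apply RatFunc.algebraMap_injective ℂ
    rw [map_mul, map_mul, ← div_eq_div_iff (RatFunc.algebraMap_ne_zero hE)
      (RatFunc.algebraMap_ne_zero hq), RatFunc.num_div_denom, hf]
  have h' := congrArg Polynomial.derivative h
  rw [Polynomial.derivative_mul, Polynomial.derivative_mul] at h'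
  have hpoly : (Polynomial.derivative f.num * f.denom - f.num * Polynomial.derivative f.denom)
        * q ^ 2
      = (Polynomial.derivative p * q - p * Polynomial.derivative q) * f.denom ^ 2 := by
    generalize f.num = N at *
    generalize f.denom = E at *
    linear_combination (E * q) * h' -
      (Polynomial.derivative E * q + E * Polynomial.derivative q) * h
  unfold rderiv
  rw [div_eq_div_iff (RatFunc.algebraMap_ne_zero (pow_ne_zero 2 hE))
    (RatFunc.algebraMap_ne_zero (pow_ne_zero 2 hq)), ← map_mul, ← map_mul, hpoly]

theorem rderiv_mul (f g : RatFunc ℂ) : rderiv (f * g) = rderiv f * g + f * rderiv g := by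
  have hf := RatFunc.algebraMap_ne_zero f.denom_ne_zero
  have hg := RatFunc.algebraMap_ne_zero g.denom_ne_zero
  have key := rderiv_of_eq_div (f * g) (f.num * g.num) (f.denom * g.denom)
    (mul_ne_zero f.denom_ne_zero g.denom_ne_zero) (by
      rw [map_mul, map_mul, mul_div_mul_comm, RatFunc.num_div_denom, RatFunc.num_div_denom])
  rw [key]
  -- Only the explicit factors `f` and `g` are written as fractions, not those inside `rderiv`.
  have e2 : rderiv f * g + f * rderiv g
      = rderiv f * (algebraMap (Polynomial ℂ) (RatFunc ℂ) g.num
          / algebraMap (Polynomial ℂ) (RatFunc ℂ) g.denom)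
        + (algebraMap (Polynomial ℂ) (RatFunc ℂ) f.num
          / algebraMap (Polynomial ℂ) (RatFunc ℂ) f.denom) * rderiv g := by
    rw [RatFunc.num_div_denom, RatFunc.num_div_denom]
  rw [e2]
  unfold rderiv
  simp only [Polynomial.derivative_mul, map_mul, map_sub, map_add, map_pow]
  field_simp
  ring

/-- The sum of the values of `f` over all shuffles of `u` and `v`, with multiplicity: the image of
`u ш v` under the additive extension of `f`. -/
def shSum {α N : Type*} [AddCommMonoid N] (f : List α → N) (u v : List α) : N :=
  ((shuf u v).map f).sum

section shSum

variable {α N : Type*} [AddCommMonoid N]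

theorem shSum_nil_left (f : List α → N) (v : List α) : shSum f [] v = f v := by
  simp [shSum, shuf]

theorem shSum_nil_right (f : List α → N) (u : List α) : shSum f u [] = f u := by
  cases u <;> simp [shSum, shuf]

theorem shSum_cons (f : List α → N) (a b : α) (u v : List α) :
    shSum f (a :: u) (b :: v)
      = shSum (fun w => f (a :: w)) u (b :: v) + shSum (fun w => f (b :: w)) (a :: u) v := by
  simp [shSum, shuf, Function.comp_def]

theorem shSum_add (f g : List α → N) (u v : List α) :
    shSum (fun w => f w + g w) u v = shSum f u v + shSum g u v := by
  simp [shSum, List.sum_map_add]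

theorem map_shSum {P F : Type*} [AddCommMonoid P] [FunLike F N P] [AddMonoidHomClass F N P]
    (D : F) (f : List α → N) (u v : List α) :
    D (shSum f u v) = shSum (fun w => D (f w)) u v := by
  simp [shSum, map_list_sum, Function.comp_def]

/-- The last-letter recursion of the shuffle product: `ua ш vb = (u ш vb)a + (ua ш v)b`. -/
theorem shSum_append (a b : α) (u v : List α) (f : List α → N) :
    shSum f (u ++ [a]) (v ++ [b])
      = shSum (fun w => f (w ++ [a])) u (v ++ [b])
        + shSum (fun w => f (w ++ [b])) (u ++ [a]) v := by
  induction u generalizing v f with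
  | nil =>
    induction v generalizing f with
    | nil =>
      simp [shSum_cons, shSum_nil_left, shSum_nil_right, add_comm]
    | cons d v ih =>
      have ih := ih (fun w => f (d :: w))
      simp only [List.nil_append, List.cons_append, shSum_cons, shSum_nil_left] at ih ⊢
      rw [ih]
      abel
  | cons c u ihu =>
    induction v generalizing f with
    | nil =>
      have h := ihu [] (fun w => f (c :: w))
      simp only [List.nil_append, List.cons_append, shSum_cons, shSum_nil_right] at h ⊢
      rw [h]
      abel
    | cons d v ihv =>
      have h1 := ihu (d :: v) (fun w => f (c :: w))
      have h2 := ihv (fun w => f (d :: w))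
      simp only [List.cons_append, shSum_cons] at h1 h2 ⊢
      rw [h1, h2]
      abel

end shSum

/-- **`∂_z` is a derivation for the shuffle product** on the free module of
words over `Σ` with coefficients in `O_Σ`: if `mul` is the bilinear product
with `(u⊗φ)·(v⊗ψ) = (u ш v)⊗(φψ)`, and `∂_z` is the ℂ-linear map with
`∂_z(e⊗φ) = e⊗φ'` and `∂_z(wa⊗φ) = wa⊗φ' + w⊗(φ/(z−a))`, then
`∂_z(x·y) = (∂_z x)·y + x·(∂_z y)`. -/
theorem partial_is_derivation_shuffle
    (S : Finset ℂ)
    (mul : Mdl S →ₗ[ℂ] Mdl S →ₗ[ℂ] Mdl S)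
    (hmul : ∀ (u v : Word S) (φ ψ : RatFunc ℂ),
      mul (Finsupp.single u φ) (Finsupp.single v ψ)
        = ((shuf u v).map (fun w => Finsupp.single w (φ * ψ))).sum)
    (D : Mdl S →ₗ[ℂ] Mdl S)
    (hD0 : ∀ φ : RatFunc ℂ,
      D (Finsupp.single ([] : Word S) φ) = Finsupp.single ([] : Word S) (rderiv φ))
    (hD1 : ∀ (w : Word S) (A : {a : ℂ // a ∈ S}) (φ : RatFunc ℂ),
      D (Finsupp.single (w ++ [A]) φ)
        = Finsupp.single (w ++ [A]) (rderiv φ)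
          + Finsupp.single w (φ / (RatFunc.X - RatFunc.C (A : ℂ)))) :
    ∀ x y : Mdl S, (∀ w : Word S, x w ∈ ratO S) → (∀ w : Word S, y w ∈ ratO S) →
      D (mul x y) = mul (D x) y + mul x (D y) := by
  -- The Leibniz rule holds for all rational coefficients, so membership in `ratO S` plays no role.
  rintro x y - -
  have hmul' : ∀ (u v : Word S) (φ ψ : RatFunc ℂ),
      mul (Finsupp.single u φ) (Finsupp.single v ψ)
        = shSum (fun w => Finsupp.single w (φ * ψ)) u v := hmul
  have key : ∀ (u v : Word S) (φ ψ : RatFunc ℂ),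
      D (mul (Finsupp.single u φ) (Finsupp.single v ψ))
        = mul (D (Finsupp.single u φ)) (Finsupp.single v ψ)
          + mul (Finsupp.single u φ) (D (Finsupp.single v ψ)) := by
    intro u v φ ψ
    rw [hmul', map_shSum]
    rcases List.eq_nil_or_concat' u with rfl | ⟨u, a, rfl⟩ <;>
      rcases List.eq_nil_or_concat' v with rfl | ⟨v, b, rfl⟩
    · simp only [hD0, hmul', shSum_nil_left, rderiv_mul, Finsupp.single_add]
    · simp only [hD0, hD1, map_add, hmul', shSum_nil_left, rderiv_mul, Finsupp.single_add,
        mul_div_assoc]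
      abel
    · simp only [hD0, hD1, map_add, LinearMap.add_apply, hmul', shSum_nil_right, rderiv_mul,
        Finsupp.single_add, div_mul_eq_mul_div]
      abel
    · have hφ : ∀ c : RatFunc ℂ, φ / c * ψ = φ * ψ / c := fun c => div_mul_eq_mul_div _ _ _
      have hψ : ∀ c : RatFunc ℂ, φ * (ψ / c) = φ * ψ / c := fun c => (mul_div_assoc _ _ _).symm
      simp only [hD1, map_add, LinearMap.add_apply, hmul', shSum_append, shSum_add, rderiv_mul,
        Finsupp.single_add, hφ, hψ]
      abel
  induction x using Finsupp.induction_linear with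
  | zero => simp
  | add x₁ x₂ h₁ h₂ =>
    simp only [map_add, LinearMap.add_apply, h₁, h₂]
    abel
  | single u φ =>
    induction y using Finsupp.induction_linear with
    | zero => simp
    | add y₁ y₂ h₁ h₂ =>
      simp only [map_add, h₁, h₂]
      abel
    | single v ψ => exact key u v φ ψ
end

section
/- Let Σ be a set of letters containing a distinguished letter 0, and let A be the free ℂ-vector space on the set Σ* of words over Σ, made into a commutative unital ℂ-algebra by the shuffle product ш. Let M₀ : A → A be a unital ℂ-algebra homomorphism (with respect to ш) such that: (i) M₀(0^{n}) = Σ_{j=0}^{n} ((2πi)^j / j!)·0^{n−j} for every n ≥ 0, where 0^{m} denotes the word consisting of m letters 0; and (ii) M₀(w) = w for every word w whose first letter is different from 0. Then for every k ≥ 0 and every word w whose first letter is different from 0 (or w empty), M₀(0^{k}w) = Σ_{j=0}^{k} ((2πi)^j / j!)·0^{k−j}w. (This is the combinatorial content of the monodromy formula M₀ L_{0^{k}w}(z) = Σ_{j=0}^{k} ((2πi)^j/j!) L_{0^{k−j}w}(z) for hyperlogarithms.) -/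
/-!
Write `t = 2πi`, let `a ≠ 0` be a letter and let `P m` be the linear operator "prepend `0^m a`".
Sorting the shuffles of `0^k` with `a u` by the number `i` of zeros to the right of `a` gives

  `0^k ш a u = ∑_{i ≤ k} P (k - i) (0^i ш u)`   (`shuffle_zeros`),

whose term `i = 0` is the word `0^k a u`. Since `M₀` is multiplicative, fixes `a u` and is known on
`0^k`, the left side is mapped to `∑_j t^j/j! (0^{k-j} ш a u)`. Expanding this by the same identity
and exchanging the sums yields `∑_i ∑_{j ≤ k-i} t^j/j! P (k-i-j) (0^i ш u)`. By strong induction on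
`k` (and linearity in the argument of `P`) the terms with `i ≥ 1` agree with the images of the terms
`i ≥ 1` on the right, so the terms with `i = 0` agree as well, which is the formula for `0^k a u`.
-/


open Finset

/-- The linear operator on formal sums of words that prepends the word `p` to each word. -/
noncomputable def prep {σ : Type*} (p : List σ) : (List σ →₀ ℂ) →ₗ[ℂ] (List σ →₀ ℂ) :=
  Finsupp.lmapDomain ℂ ℂ (fun v => p ++ v)

theorem prep_single {σ : Type*} (p v : List σ) (c : ℂ) :
    prep p (Finsupp.single v c) = Finsupp.single (p ++ v) c := by
  simp [prep, Finsupp.mapDomain_single]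

theorem prep_prep {σ : Type*} (p q : List σ) (x : List σ →₀ ℂ) :
    prep p (prep q x) = prep (p ++ q) x := by
  induction x using Finsupp.induction_linear with
  | zero => simp
  | add x y hx hy => simp only [map_add, hx, hy]
  | single v c => simp only [prep_single, List.append_assoc]

theorem sum_map_cons {σ : Type*} (b : σ) (l : List (List σ)) (c : ℂ) :
    ((l.map (b :: ·)).map (fun w => Finsupp.single w c)).sum
      = prep [b] ((l.map (fun w => Finsupp.single w c)).sum) := by
  induction l with
  | nil => simp
  | cons x l ih =>
    simp only [List.map_cons, List.sum_cons, map_add, prep_single, ih, List.singleton_append]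

/-- The shuffles of `0^k` with `a u`, sorted by the number `i` of zeros to the right of `a`. -/
theorem shuffle_zeros {σ : Type*} (zero : σ)
    (mul : (List σ →₀ ℂ) →ₗ[ℂ] (List σ →₀ ℂ) →ₗ[ℂ] (List σ →₀ ℂ))
    (hmul : ∀ (u v : List σ) (c c' : ℂ),
      mul (Finsupp.single u c) (Finsupp.single v c')
        = ((shuf u v).map (fun w => Finsupp.single w (c * c'))).sum)
    (a : σ) (u : List σ) (k : ℕ) :
    mul (Finsupp.single (List.replicate k zero) 1) (Finsupp.single (a :: u) 1)
      = ∑ i ∈ Finset.range (k + 1), prep (List.replicate (k - i) zero ++ [a])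
          (mul (Finsupp.single (List.replicate i zero) 1) (Finsupp.single u 1)) := by
  induction k with
  | zero => simp [hmul, shuf, prep_single]
  | succ k ih =>
    have h : mul (Finsupp.single (List.replicate (k + 1) zero) 1) (Finsupp.single (a :: u) 1)
        = prep [zero] (mul (Finsupp.single (List.replicate k zero) 1) (Finsupp.single (a :: u) 1))
          + prep [a] (mul (Finsupp.single (List.replicate (k + 1) zero) 1)
              (Finsupp.single u 1)) := by
      simp only [hmul, ← sum_map_cons]
      rw [List.replicate_succ, shuf, List.map_append, List.sum_append]
    rw [h, ih, Finset.sum_range_succ _ (k + 1), map_sum]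
    congr 1
    · refine Finset.sum_congr rfl fun i hi => ?_
      have hi' : i ≤ k := Nat.lt_succ_iff.mp (Finset.mem_range.mp hi)
      rw [prep_prep, Nat.succ_sub hi', List.replicate_succ]
      rfl
    · simp

/-- **Monodromy at `0` of hyperlogarithms, combinatorial form**: if `M₀` is a
unital algebra homomorphism of the shuffle algebra on words over `Σ` (with
distinguished letter `0`) such that
`M₀(0^n) = Σ_{j≤n} ((2πi)^j/j!)·0^{n−j}` and `M₀(w) = w` whenever the first
letter of `w` is not `0`, then for every `k` and every word `w` that is empty
or starts with a letter `≠ 0`,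
`M₀(0^k w) = Σ_{j≤k} ((2πi)^j/j!)·0^{k−j} w`. -/
theorem monodromy_zero_formula
    {σ : Type*} (zero : σ)
    (mul : (List σ →₀ ℂ) →ₗ[ℂ] (List σ →₀ ℂ) →ₗ[ℂ] (List σ →₀ ℂ))
    (hmul : ∀ (u v : List σ) (c c' : ℂ),
      mul (Finsupp.single u c) (Finsupp.single v c')
        = ((shuf u v).map (fun w => Finsupp.single w (c * c'))).sum)
    (M₀ : (List σ →₀ ℂ) →ₗ[ℂ] (List σ →₀ ℂ))
    (hhom : ∀ x y : List σ →₀ ℂ, M₀ (mul x y) = mul (M₀ x) (M₀ y))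
    (hone : M₀ (Finsupp.single ([] : List σ) 1) = Finsupp.single ([] : List σ) 1)
    (hpow : ∀ n : ℕ,
      M₀ (Finsupp.single (List.replicate n zero) (1 : ℂ))
        = ∑ j ∈ Finset.range (n + 1),
            ((2 * Real.pi * Complex.I) ^ j / (j.factorial : ℂ)) •
              Finsupp.single (List.replicate (n - j) zero) (1 : ℂ))
    (hreg : ∀ (a : σ) (w : List σ), a ≠ zero →
      M₀ (Finsupp.single (a :: w) (1 : ℂ)) = Finsupp.single (a :: w) (1 : ℂ)) :
    ∀ (k : ℕ) (w : List σ), (∀ (a : σ) (u : List σ), w = a :: u → a ≠ zero) →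
      M₀ (Finsupp.single (List.replicate k zero ++ w) (1 : ℂ))
        = ∑ j ∈ Finset.range (k + 1),
            ((2 * Real.pi * Complex.I) ^ j / (j.factorial : ℂ)) •
              Finsupp.single (List.replicate (k - j) zero ++ w) (1 : ℂ) := by
  set c : ℕ → ℂ := fun j => (2 * Real.pi * Complex.I) ^ j / (j.factorial : ℂ) with hc
  have key : ∀ (a : σ), a ≠ zero → ∀ (k : ℕ) (x : List σ →₀ ℂ),
      M₀ (prep (List.replicate k zero ++ [a]) x)
        = ∑ j ∈ Finset.range (k + 1),
            c j • prep (List.replicate (k - j) zero ++ [a]) x := by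
    intro a ha k
    induction k using Nat.strong_induction_on with
    | _ k ih =>
    intro x
    induction x using Finsupp.induction_linear with
    | zero => simp
    | add x y hx hy => simp only [map_add, hx, hy, smul_add, Finset.sum_add_distrib]
    | single u r =>
    -- By linearity the coefficient `r` may be taken to be `1`.
    suffices h : M₀ (prep (List.replicate k zero ++ [a]) (Finsupp.single u 1))
        = ∑ j ∈ Finset.range (k + 1),
            c j • prep (List.replicate (k - j) zero ++ [a]) (Finsupp.single u 1) by
      have hr : Finsupp.single u r = r • Finsupp.single u (1 : ℂ) := by simp
      rw [hr]
      simp only [map_smul, h, Finset.smul_sum]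
      exact Finset.sum_congr rfl fun j _ => smul_comm _ _ _
    set S : ℕ → (List σ →₀ ℂ) := fun i =>
      mul (Finsupp.single (List.replicate i zero) 1) (Finsupp.single u 1) with hS
    have hS0 : S 0 = Finsupp.single u 1 := by
      cases u <;> simp [hS, hmul, shuf]
    have hsh : ∀ n, mul (Finsupp.single (List.replicate n zero) 1) (Finsupp.single (a :: u) 1)
        = ∑ i ∈ Finset.range (n + 1), prep (List.replicate (n - i) zero ++ [a]) (S i) :=
      fun n => shuffle_zeros zero mul hmul a u n
    have h1 : M₀ (mul (Finsupp.single (List.replicate k zero) 1) (Finsupp.single (a :: u) 1))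
        = ∑ i ∈ Finset.range (k + 1), ∑ j ∈ Finset.range (k - i + 1),
            c j • prep (List.replicate (k - i - j) zero ++ [a]) (S i) := by
      rw [hhom, hpow, hreg a u ha, map_sum, LinearMap.sum_apply]
      simp only [map_smul, LinearMap.smul_apply, hsh, Finset.smul_sum]
      rw [Finset.sum_comm' (t' := Finset.range (k + 1))
        (s' := fun i => Finset.range (k - i + 1))]
      · refine Finset.sum_congr rfl fun i _ => Finset.sum_congr rfl fun j _ => ?_
        rw [Nat.sub_right_comm]
      · intro i j
        simp only [Finset.mem_range]
        omega
    rw [hsh, map_sum, Finset.sum_range_succ', Finset.sum_range_succ' _ k] at h1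
    have h2 : ∑ i ∈ Finset.range k, M₀ (prep (List.replicate (k - (i + 1)) zero ++ [a]) (S (i + 1)))
        = ∑ i ∈ Finset.range k, ∑ j ∈ Finset.range (k - (i + 1) + 1),
            c j • prep (List.replicate (k - (i + 1) - j) zero ++ [a]) (S (i + 1)) := by
      refine Finset.sum_congr rfl fun i hi => ih _ ?_ _
      have := Finset.mem_range.mp hi
      omega
    rw [h2] at h1
    simpa only [Nat.sub_zero, hS0] using add_left_cancel h1
  intro k w hw
  cases w with
  | nil => simpa only [List.append_nil] using hpow k
  | cons a u =>
    have h := key a (hw a u rfl) k (Finsupp.single u 1)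
    simpa only [prep_single, List.append_assoc, List.singleton_append] using h
end
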